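/- arXiv:2507.03820 — 5 statements merged into one kernel-verified Lean document; each statement's English description precedes it below -/
import Mathlib

section
/- Let μ : ℝ[X] → ℝ be linear with μ(1) = 1 and μ(X) = 0, and set κ = log_∗ μ (so κ(1) = κ(X) = 0). Then the Wick map W(X^n) = Σ_{k=0}^n (n choose k) μ^{−1}(X^k) X^{n−k} satisfies, for every n ≥ 0, W(X^n) = X^n + Σ_{k=2}^n Σ_{j=1}^k ((−1)^j/j!) Σ_{k_1,…,k_j ≥ 2, k_1+⋯+k_j = k} (n!/((n−k)! k_1!⋯k_j!)) κ(X^{k_1})⋯κ(X^{k_j}) X^{n−k}. -/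
open Polynomial

/-- The convolution product of two linear functionals on `ℝ[X]`, determined on the
monomial basis by `(φ∗ψ)(X^n) = Σ_{k=0}^n (n choose k) φ(X^k) ψ(X^{n−k})`. -/
noncomputable def conv (φ ψ : Polynomial ℝ →ₗ[ℝ] ℝ) : Polynomial ℝ →ₗ[ℝ] ℝ :=
  (Polynomial.basisMonomials ℝ).constr ℝ fun n =>
    ∑ k ∈ Finset.range (n + 1), (n.choose k : ℝ) * φ (X ^ k) * ψ (X ^ (n - k))

/-- The counit `ε`, with `ε(X^n) = δ_{n,0}`. -/
noncomputable def counit : Polynomial ℝ →ₗ[ℝ] ℝ := Polynomial.lcoeff ℝ 0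

/-- The `k`-fold convolution power `θ^{∗k}`, with `θ^{∗0} = ε`. -/
noncomputable def convPow (φ : Polynomial ℝ →ₗ[ℝ] ℝ) : ℕ → (Polynomial ℝ →ₗ[ℝ] ℝ)
  | 0 => counit
  | k + 1 => conv φ (convPow φ k)

/-- The convolution logarithm `log_∗(μ) = Σ_{k≥1} ((−1)^{k+1}/k)(μ−ε)^{∗k}`,
a finite sum on each `X^n`. -/
noncomputable def logStar (μ : Polynomial ℝ →ₗ[ℝ] ℝ) : Polynomial ℝ →ₗ[ℝ] ℝ :=
  (Polynomial.basisMonomials ℝ).constr ℝ fun n =>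
    ∑ k ∈ Finset.Icc 1 n, ((-1 : ℝ) ^ (k + 1) / k) * convPow (μ - counit) k (X ^ n)

/-- The set of ordered `j`-tuples `(k_1,…,k_j)` of integers `≥ 2` with `k_1+⋯+k_j = k`. -/
noncomputable def tuples2 (j k : ℕ) : Finset (Fin j → ℕ) :=
  (Fintype.piFinset fun _ => Finset.Icc 2 k).filter fun f => ∑ i, f i = k

namespace WickAux

/-- exponential generating function of the moments of a functional -/
noncomputable def gen (φ : Polynomial ℝ →ₗ[ℝ] ℝ) : PowerSeries ℝ :=
  PowerSeries.mk fun n => φ (X ^ n) / n.factorial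

lemma basis_eval (g : ℕ → ℝ) (n : ℕ) :
    (Polynomial.basisMonomials ℝ).constr ℝ g (X ^ n) = g n := by
  have h : (X ^ n : Polynomial ℝ) = Polynomial.basisMonomials ℝ n := by
    simp [Polynomial.coe_basisMonomials, Polynomial.monomial_one_right_eq_X_pow]
  rw [h, Module.Basis.constr_basis]

lemma gen_conv (φ ψ : Polynomial ℝ →ₗ[ℝ] ℝ) : gen (conv φ ψ) = gen φ * gen ψ := by
  ext n
  rw [PowerSeries.coeff_mul, Finset.Nat.sum_antidiagonal_eq_sum_range_succ_mk]
  simp only [gen, PowerSeries.coeff_mk, conv, basis_eval]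
  rw [Finset.sum_div]
  refine Finset.sum_congr rfl fun k hk => ?_
  have hk' : k ≤ n := by simpa [Nat.lt_succ_iff] using hk
  have h := Nat.choose_mul_factorial_mul_factorial hk'
  have h' : (n.choose k : ℝ) * k.factorial * (n - k).factorial = n.factorial := by
    exact_mod_cast h
  have h1 : (n.factorial : ℝ) ≠ 0 := by positivity
  have h2 : (k.factorial : ℝ) ≠ 0 := by positivity
  have h3 : ((n - k).factorial : ℝ) ≠ 0 := by positivity
  field_simp
  rw [← h']
  ring

lemma gen_counit : gen counit = 1 := by
  ext n
  simp only [gen, PowerSeries.coeff_mk, counit, Polynomial.lcoeff_apply, PowerSeries.coeff_one,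
    Polynomial.coeff_X_pow]
  by_cases h : n = 0
  · simp [h]
  · simp [h, Ne.symm h]

lemma gen_convPow (φ : Polynomial ℝ →ₗ[ℝ] ℝ) (k : ℕ) : gen (convPow φ k) = gen φ ^ k := by
  induction k with
  | zero => simp [convPow, gen_counit]
  | succ k ih => rw [convPow, gen_conv, ih, pow_succ']

lemma gen_sub (φ ψ : Polynomial ℝ →ₗ[ℝ] ℝ) : gen (φ - ψ) = gen φ - gen ψ := by
  ext n
  simp [gen, sub_div]

lemma coeff_subst_fin (f b : PowerSeries ℝ) (hb : PowerSeries.constantCoeff b = 0) (n : ℕ) :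
    PowerSeries.coeff n (f.subst b) =
      ∑ d ∈ Finset.range (n + 1), PowerSeries.coeff d f * PowerSeries.coeff n (b ^ d) := by
  rw [PowerSeries.coeff_subst' (PowerSeries.HasSubst.of_constantCoeff_zero' hb)]
  rw [finsum_eq_sum_of_support_subset]
  · rfl
  · intro d hd
    by_contra hlt
    have hlt : n < d := by simpa using hlt
    apply hd
    have hdv : (PowerSeries.X : PowerSeries ℝ) ^ d ∣ b ^ d :=
      pow_dvd_pow_of_dvd (PowerSeries.X_dvd_iff.mpr hb) d
    simp [PowerSeries.X_pow_dvd_iff.mp hdv n hlt]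

lemma gen_log (μ : Polynomial ℝ →ₗ[ℝ] ℝ) (h1 : μ 1 = 1) :
    gen (logStar μ) = PowerSeries.logOf (gen μ) := by
  have hc : PowerSeries.constantCoeff (gen μ - 1) = 0 := by
    rw [← PowerSeries.coeff_zero_eq_constantCoeff_apply]
    simp [gen, h1]
  ext n
  rw [PowerSeries.logOf_eq, coeff_subst_fin _ _ hc, Finset.sum_range_succ',
    ← gen_counit, ← gen_sub]
  simp only [← gen_convPow]
  simp only [gen, logStar, PowerSeries.coeff_mk, basis_eval, PowerSeries.coeff_log]
  rw [Finset.sum_div, Finset.sum_bij' (i := fun k _ => k - 1) (j := fun k _ => k + 1)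
    (t := Finset.range n)
    (g := fun k => (-1 : ℝ) ^ (k + 1 + 1) / (k + 1 : ℕ) *
      convPow (μ - counit) (k + 1) (X ^ n) / n.factorial)]
  · simp [mul_div_assoc]
  · intro k hk; simp at hk ⊢; omega
  · intro k hk; simp at hk ⊢; omega
  · intro k hk; simp at hk ⊢; omega
  · intro k hk; simp
  · intro k hk
    have : k - 1 + 1 = k := by simp at hk; omega
    simp only [this]

/-- `exp(-X)` -/
noncomputable def expNeg : PowerSeries ℝ :=
  PowerSeries.mk fun j => (-1 : ℝ) ^ j / j.factorial

lemma deriv_expNeg : PowerSeries.derivative ℝ expNeg = - expNeg := by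
  ext n
  rw [PowerSeries.coeff_derivative]
  simp only [expNeg, PowerSeries.coeff_mk, map_neg, Nat.factorial_succ]
  have h1 : (n.factorial : ℝ) ≠ 0 := by positivity
  have h2 : (n + 1 : ℝ) ≠ 0 := by positivity
  push_cast
  field_simp
  ring

lemma log_deriv (M : PowerSeries ℝ) (hM : PowerSeries.constantCoeff M = 1) :
    M * PowerSeries.derivative ℝ (PowerSeries.logOf M) = PowerSeries.derivative ℝ M := by
  have hc : PowerSeries.constantCoeff (M - 1) = 0 := by simp [hM]
  have hs := PowerSeries.HasSubst.of_constantCoeff_zero' hc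
  have key : (1 + PowerSeries.X) * PowerSeries.derivative ℝ (PowerSeries.log ℝ) = 1 := by
    rw [PowerSeries.deriv_log]
    ext n
    rw [add_mul, one_mul, map_add]
    cases n with
    | zero => simp
    | succ n => simp [PowerSeries.coeff_succ_X_mul, PowerSeries.coeff_one, pow_succ]
  have key2 := congrArg (PowerSeries.subst (M - 1)) key
  rw [PowerSeries.subst_mul hs, PowerSeries.subst_add hs, PowerSeries.subst_X hs,
    ← PowerSeries.coe_substAlgHom hs, map_one, PowerSeries.coe_substAlgHom hs,
    add_sub_cancel] at key2
  rw [PowerSeries.logOf_eq, PowerSeries.derivative_subst hs, ← mul_assoc, key2]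
  simp [PowerSeries.derivative_one]

lemma mul_exp (M : PowerSeries ℝ) (hM : PowerSeries.constantCoeff M = 1) :
    M * expNeg.subst (PowerSeries.logOf M) = 1 := by
  have hL := PowerSeries.constantCoeff_logOf hM
  have hs := PowerSeries.HasSubst.of_constantCoeff_zero' hL
  apply PowerSeries.derivative.ext
  · rw [Derivation.leibniz, PowerSeries.derivative_subst hs, deriv_expNeg,
      ← PowerSeries.coe_substAlgHom hs, map_neg, ← log_deriv M hM, PowerSeries.derivative_one]
    simp only [smul_eq_mul]
    ring
  · rw [map_mul, hM, one_mul, ← PowerSeries.coeff_zero_eq_constantCoeff_apply,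
      coeff_subst_fin _ _ hL]
    simp [expNeg]

lemma gen_inv (μ μinv : Polynomial ℝ →ₗ[ℝ] ℝ) (h1 : μ 1 = 1) (hl : conv μinv μ = counit) :
    gen μinv = expNeg.subst (gen (logStar μ)) := by
  have hM : PowerSeries.constantCoeff (gen μ) = 1 := by
    rw [← PowerSeries.coeff_zero_eq_constantCoeff_apply]
    simp [gen, h1]
  have h := mul_exp _ hM
  have h2 : gen μinv * gen μ = 1 := by rw [← gen_conv, hl, gen_counit]
  rw [gen_log μ h1]
  exact left_inv_eq_right_inv h2 h

lemma kappa_zero (μ : Polynomial ℝ →ₗ[ℝ] ℝ) : logStar μ (X ^ 0) = 0 := by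
  rw [logStar, basis_eval]; simp

lemma kappa_one (μ : Polynomial ℝ →ₗ[ℝ] ℝ) (h1 : μ 1 = 1) (hX : μ X = 0) :
    logStar μ (X ^ 1) = 0 := by
  rw [logStar, basis_eval]
  simp only [Finset.Icc_self, Finset.sum_singleton, convPow, conv, basis_eval]
  simp [Finset.sum_range_succ, h1, hX, counit]

lemma coeff_pow_tuples (φ : Polynomial ℝ →ₗ[ℝ] ℝ) (h0 : φ (X ^ 0) = 0) (h1 : φ (X ^ 1) = 0)
    (j k : ℕ) : PowerSeries.coeff k (gen φ ^ j) =
      ∑ f ∈ tuples2 j k, ∏ i, (φ (X ^ f i) / (f i).factorial) := by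
  have : gen φ ^ j = ∏ _i : Fin j, gen φ := by simp
  rw [this, PowerSeries.coeff_prod]
  simp only [gen, PowerSeries.coeff_mk]
  symm
  refine Finset.sum_bij_ne_zero (i := fun f _ _ => Finsupp.equivFunOnFinite.symm f) ?_ ?_ ?_ ?_
  · intro f hf _
    simp only [tuples2, Finset.mem_filter] at hf
    simp [Finset.mem_finsuppAntidiag, hf.2]
  · intro f _ _ g _ _ h
    exact Finsupp.equivFunOnFinite.symm.injective h
  · intro l hl hne
    rw [Finset.mem_finsuppAntidiag] at hl
    refine ⟨l, ?_, hne, by ext; simp⟩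
    simp only [tuples2, Finset.mem_filter, Fintype.mem_piFinset, Finset.mem_Icc]
    refine ⟨fun i => ⟨?_, ?_⟩, hl.1⟩
    · by_contra hlt
      have hi := (Finset.prod_ne_zero_iff.mp hne) i (Finset.mem_univ i)
      have : l i = 0 ∨ l i = 1 := by omega
      rcases this with h | h
      · rw [h, h0] at hi; simp at hi
      · rw [h, h1] at hi; simp at hi
    · rw [← hl.1]
      exact Finset.single_le_sum (f := fun i => l i) (fun _ _ => Nat.zero_le _) (Finset.mem_univ i)
  · intro f _ _
    simp

lemma inv_formula (μ μinv : Polynomial ℝ →ₗ[ℝ] ℝ) (h1 : μ 1 = 1) (hX : μ X = 0)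
    (hl : conv μinv μ = counit) (k : ℕ) :
    μinv (X ^ k) / k.factorial = ∑ j ∈ Finset.range (k + 1), ((-1 : ℝ) ^ j / j.factorial) *
      ∑ f ∈ tuples2 j k, ∏ i, (logStar μ (X ^ f i) / (f i).factorial) := by
  have h := congrArg (PowerSeries.coeff k) (gen_inv μ μinv h1 hl)
  have hc : PowerSeries.constantCoeff (gen (logStar μ)) = 0 := by
    rw [← PowerSeries.coeff_zero_eq_constantCoeff_apply, gen, PowerSeries.coeff_mk, kappa_zero]
    simp
  rw [coeff_subst_fin _ _ hc] at h
  simp only [coeff_pow_tuples _ (kappa_zero μ) (kappa_one μ h1 hX)] at h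
  simpa only [gen, expNeg, PowerSeries.coeff_mk] using h

lemma tuples_zero (k : ℕ) (hk : k ≠ 0) : tuples2 0 k = ∅ := by
  ext f; simp [tuples2, Ne.symm hk]

lemma tuples_one (j : ℕ) : tuples2 j 1 = ∅ := by
  ext f
  simp only [tuples2, Finset.mem_filter, Fintype.mem_piFinset, Finset.mem_Icc]
  cases j with
  | zero => simp
  | succ j =>
    simp only [Finset.notMem_empty, iff_false]
    rintro ⟨h, _⟩
    have := h 0
    omega

end WickAux

/-- Let `μ` be linear with `μ(1) = 1`, `μ(X) = 0`, convolution inverse `μ⁻¹`, and set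
`κ = log_∗ μ`. The Wick map `W(X^n) = Σ_{k=0}^n (n choose k) μ⁻¹(X^k) X^{n−k}` satisfies
`W(X^n) = X^n + Σ_{k=2}^n Σ_{j=1}^k ((−1)^j/j!) Σ_{k_1,…,k_j ≥ 2, k_1+⋯+k_j = k}
(n!/((n−k)! k_1!⋯k_j!)) κ(X^{k_1})⋯κ(X^{k_j}) X^{n−k}`. -/
theorem stmt_7 (μ μinv : Polynomial ℝ →ₗ[ℝ] ℝ) (h1 : μ 1 = 1) (hX : μ X = 0)
    (hr : conv μ μinv = counit) (hl : conv μinv μ = counit) :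
    ∀ n : ℕ,
      ∑ k ∈ Finset.range (n + 1), ((n.choose k : ℝ) * μinv (X ^ k)) • (X ^ (n - k) : Polynomial ℝ) =
      (X ^ n : Polynomial ℝ) + ∑ k ∈ Finset.Icc 2 n, ∑ j ∈ Finset.Icc 1 k,
        (((-1 : ℝ) ^ j / j.factorial) *
          ∑ f ∈ tuples2 j k,
            ((n.factorial : ℝ) / (((n - k).factorial : ℝ) * ∏ i, ((f i).factorial : ℝ))) *
              ∏ i, logStar μ (X ^ f i)) • X ^ (n - k) := by
  intro n
  have hinv := WickAux.inv_formula μ μinv h1 hX hl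
  have hz : μinv (X ^ 0) = 1 := by
    have := hinv 0
    simpa [tuples2] using this
  have ho : μinv (X ^ 1) = 0 := by
    have := hinv 1
    simpa [WickAux.tuples_one] using this
  have hrange : Finset.range (n + 1) = insert 0 (Finset.Icc 1 n) := by
    ext k; simp; omega
  rw [hrange, Finset.sum_insert (by simp), hz]
  congr 1
  · simp
  have hsub : Finset.Icc 2 n ⊆ Finset.Icc 1 n := Finset.Icc_subset_Icc (by norm_num) le_rfl
  rw [← Finset.sum_subset hsub]
  · refine Finset.sum_congr rfl fun k hk => ?_
    rw [Finset.mem_Icc] at hk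
    rw [← Finset.sum_smul]
    congr 1
    have hk0 : (k.factorial : ℝ) ≠ 0 := by positivity
    have hnk0 : ((n - k).factorial : ℝ) ≠ 0 := by positivity
    have hch : (n.choose k : ℝ) * k.factorial = n.factorial / (n - k).factorial := by
      rw [eq_div_iff hnk0]
      exact_mod_cast Nat.choose_mul_factorial_mul_factorial hk.2
    have hr2 : Finset.range (k + 1) = insert 0 (Finset.Icc 1 k) := by
      ext j; simp; omega
    have h := hinv k
    rw [hr2, Finset.sum_insert (by simp), WickAux.tuples_zero k (by omega), Finset.sum_empty,
      mul_zero, zero_add, div_eq_iff hk0] at h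
    rw [h, mul_comm _ (k.factorial : ℝ), ← mul_assoc, hch, Finset.mul_sum]
    refine Finset.sum_congr rfl fun j _ => ?_
    rw [mul_left_comm, Finset.mul_sum]
    congr 1
    refine Finset.sum_congr rfl fun f _ => ?_
    rw [Finset.prod_div_distrib, div_mul_div_comm, div_mul_eq_mul_div]
  · intro k hk hk2
    have : k = 1 := by simp at hk hk2; omega
    rw [this, ho]
    simp
end

section
/- Let σ ∈ ℝ, let κ : ℝ[X] → ℝ be the linear functional with κ(X^2) = σ² and κ(X^m) = 0 for all m ≠ 2, and let μ = exp_∗(κ) (the Gaussian moment functional of variance σ²). Then the associated Wick map satisfies, for every n ≥ 0, W(X^n) = n! Σ_{k=0}^{⌊n/2⌋} ((−1)^k/(k!(n−2k)! 2^k)) σ^{2k} X^{n−2k}, i.e. W(X^n) is the n-th Hermite polynomial with variance σ². -/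
open Polynomial

/-- The convolution exponential `exp_∗(κ) = Σ_{k≥0} κ^{∗k}/k!`, a finite sum on each
`X^n` when `κ(1) = 0`. -/
noncomputable def expStar (φ : Polynomial ℝ →ₗ[ℝ] ℝ) : Polynomial ℝ →ₗ[ℝ] ℝ :=
  (Polynomial.basisMonomials ℝ).constr ℝ fun n =>
    ∑ k ∈ Finset.range (n + 1), convPow φ k (X ^ n) / k.factorial

theorem conv_X_pow (φ ψ : Polynomial ℝ →ₗ[ℝ] ℝ) (n : ℕ) :
    conv φ ψ (X ^ n) =
      ∑ k ∈ Finset.range (n + 1), (n.choose k : ℝ) * φ (X ^ k) * ψ (X ^ (n - k)) := by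
  have h := (Polynomial.basisMonomials ℝ).constr_basis ℝ (fun n =>
    ∑ k ∈ Finset.range (n + 1), (n.choose k : ℝ) * φ (X ^ k) * ψ (X ^ (n - k))) n
  rw [Polynomial.coe_basisMonomials] at h
  beta_reduce at h
  rw [Polynomial.monomial_one_right_eq_X_pow] at h
  exact h

theorem expStar_X_pow (φ : Polynomial ℝ →ₗ[ℝ] ℝ) (n : ℕ) :
    expStar φ (X ^ n) = ∑ k ∈ Finset.range (n + 1), convPow φ k (X ^ n) / k.factorial := by
  have h := (Polynomial.basisMonomials ℝ).constr_basis ℝ (fun n =>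
    ∑ k ∈ Finset.range (n + 1), convPow φ k (X ^ n) / (k.factorial : ℝ)) n
  rw [Polynomial.coe_basisMonomials] at h
  beta_reduce at h
  rw [Polynomial.monomial_one_right_eq_X_pow] at h
  exact h

/-- Exponential generating series of a functional. -/
noncomputable def egs (φ : Polynomial ℝ →ₗ[ℝ] ℝ) : PowerSeries ℝ :=
  PowerSeries.mk fun n => φ (X ^ n) / n.factorial

theorem egs_conv (φ ψ : Polynomial ℝ →ₗ[ℝ] ℝ) : egs (conv φ ψ) = egs φ * egs ψ := by
  ext n
  rw [PowerSeries.coeff_mul, Finset.Nat.sum_antidiagonal_eq_sum_range_succ_mk]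
  simp only [egs, PowerSeries.coeff_mk]
  rw [conv_X_pow, Finset.sum_div]
  refine Finset.sum_congr rfl fun k hk => ?_
  have hk' : k ≤ n := by simpa [Nat.lt_succ_iff] using hk
  rw [Nat.cast_choose ℝ hk']
  have h1 : (n.factorial : ℝ) ≠ 0 := by positivity
  have h2 : (k.factorial : ℝ) ≠ 0 := by positivity
  have h3 : ((n - k).factorial : ℝ) ≠ 0 := by positivity
  field_simp

theorem egs_counit : egs counit = 1 := by
  ext n
  simp only [egs, PowerSeries.coeff_mk, counit, PowerSeries.coeff_one, Polynomial.lcoeff_apply,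
    Polynomial.coeff_X_pow]
  by_cases h : n = 0
  · subst h; simp
  · simp [h, Ne.symm h]

/-- The series `exp (c X^2)`. -/
noncomputable def gser (c : ℝ) : PowerSeries ℝ :=
  PowerSeries.expand 2 two_ne_zero (PowerSeries.rescale c (PowerSeries.exp ℝ))

theorem gser_mul (c : ℝ) : gser c * gser (-c) = 1 := by
  rw [gser, gser, ← map_mul, PowerSeries.exp_mul_exp_eq_exp_add]
  simp

theorem coeff_gser_even (c : ℝ) (k : ℕ) :
    PowerSeries.coeff (2 * k) (gser c) = c ^ k / k.factorial := by
  rw [gser, PowerSeries.coeff_expand_mul, PowerSeries.coeff_rescale, PowerSeries.coeff_exp]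
  simp [div_eq_mul_inv]

theorem coeff_gser_odd (c : ℝ) (k : ℕ) (h : ¬ 2 ∣ k) :
    PowerSeries.coeff k (gser c) = 0 := by
  rw [gser, PowerSeries.coeff_expand_of_not_dvd _ _ _ h]

theorem egs_convPow (σ : ℝ) (κ : Polynomial ℝ →ₗ[ℝ] ℝ)
    (hκ : ∀ n : ℕ, κ (X ^ n) = if n = 2 then σ ^ 2 else 0) (k : ℕ) :
    egs (convPow κ k) = PowerSeries.monomial (2 * k) ((σ ^ 2 / 2) ^ k) := by
  induction k with
  | zero => simp [convPow, egs_counit]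
  | succ k ih =>
    have h : egs κ = PowerSeries.monomial 2 (σ ^ 2 / 2) := by
      ext n
      rw [egs, PowerSeries.coeff_mk, hκ, PowerSeries.coeff_monomial]
      by_cases h : n = 2
      · subst h; simp
      · simp [h]
    rw [convPow, egs_conv, ih, h, PowerSeries.monomial_mul_monomial,
      pow_succ' (σ ^ 2 / 2) k, mul_add, add_comm 2, mul_one]

theorem egs_expStar (σ : ℝ) (κ : Polynomial ℝ →ₗ[ℝ] ℝ)
    (hκ : ∀ n : ℕ, κ (X ^ n) = if n = 2 then σ ^ 2 else 0) :
    egs (expStar κ) = gser (σ ^ 2 / 2) := by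
  ext n
  have h1 : PowerSeries.coeff n (egs (expStar κ)) = ∑ k ∈ Finset.range (n + 1),
      (if n = 2 * k then (σ ^ 2 / 2) ^ k else 0) / (k.factorial : ℝ) := by
    rw [egs, PowerSeries.coeff_mk, expStar_X_pow, Finset.sum_div]
    refine Finset.sum_congr rfl fun k _ => ?_
    rw [← PowerSeries.coeff_monomial, ← egs_convPow σ κ hκ k, egs, PowerSeries.coeff_mk]
    ring
  rw [h1]
  by_cases hn : 2 ∣ n
  · obtain ⟨m, rfl⟩ := hn
    rw [coeff_gser_even, Finset.sum_eq_single m]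
    · simp
    · intro b _ hb
      rw [if_neg (by omega), zero_div]
    · intro h
      exact absurd (Finset.mem_range.2 (by omega)) h
  · rw [coeff_gser_odd _ _ hn]
    refine Finset.sum_eq_zero fun k _ => ?_
    rw [if_neg (fun h => hn ⟨k, h⟩), zero_div]

theorem sum_even_only {M : Type*} [AddCommMonoid M] (f : ℕ → M) (n : ℕ)
    (hf : ∀ k, ¬ 2 ∣ k → f k = 0) :
    ∑ k ∈ Finset.range (n + 1), f k = ∑ k ∈ Finset.range (n / 2 + 1), f (2 * k) := by
  symm
  refine Finset.sum_of_injOn (fun k => 2 * k) ?_ ?_ ?_ ?_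
  · intro a _ b _ h
    simpa using h
  · intro a ha
    simp only [Finset.coe_range, Set.mem_Iio] at ha ⊢
    omega
  · intro k hk hk'
    refine hf k fun ⟨m, hm⟩ => hk' ⟨m, ?_, hm.symm⟩
    simp only [Finset.coe_range, Set.mem_Iio, Finset.mem_range] at hk ⊢
    omega
  · intro k _
    rfl

/-- Let `κ` be the linear functional with `κ(X²) = σ²` and `κ(X^m) = 0` for `m ≠ 2`, let
`μ = exp_∗(κ)` be the Gaussian moment functional of variance `σ²` and `μ⁻¹` its
convolution inverse. Then the Wick map `W(X^n) = Σ_{k=0}^n (n choose k) μ⁻¹(X^k) X^{n−k}`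
gives `W(X^n) = n! Σ_{k=0}^{⌊n/2⌋} ((−1)^k/(k!(n−2k)!2^k)) σ^{2k} X^{n−2k}`,
the `n`-th Hermite polynomial with variance `σ²`. -/
theorem stmt_10 (σ : ℝ) (κ μinv : Polynomial ℝ →ₗ[ℝ] ℝ)
    (hκ : ∀ n : ℕ, κ (X ^ n) = if n = 2 then σ ^ 2 else 0)
    (hr : conv (expStar κ) μinv = counit) (hl : conv μinv (expStar κ) = counit) :
    ∀ n : ℕ,
      ∑ k ∈ Finset.range (n + 1), ((n.choose k : ℝ) * μinv (X ^ k)) • (X ^ (n - k) : Polynomial ℝ) =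
      ∑ k ∈ Finset.range (n / 2 + 1),
        ((n.factorial : ℝ) * ((-1 : ℝ) ^ k /
            ((k.factorial : ℝ) * ((n - 2 * k).factorial : ℝ) * 2 ^ k)) * σ ^ (2 * k)) •
          (X ^ (n - 2 * k) : Polynomial ℝ) := by
  have hinv : egs μinv = gser (-(σ ^ 2 / 2)) := by
    have h1 : gser (σ ^ 2 / 2) * egs μinv = 1 := by
      rw [← egs_expStar σ κ hκ, ← egs_conv, hr, egs_counit]
    have h2 := gser_mul (σ ^ 2 / 2)
    calc egs μinv = (gser (σ ^ 2 / 2) * gser (-(σ ^ 2 / 2))) * egs μinv := by rw [h2, one_mul]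
      _ = (gser (σ ^ 2 / 2) * egs μinv) * gser (-(σ ^ 2 / 2)) := by ring
      _ = _ := by rw [h1, one_mul]
  have hm : ∀ k, μinv (X ^ k) =
      k.factorial * PowerSeries.coeff k (gser (-(σ ^ 2 / 2))) := by
    intro k
    rw [← hinv, egs, PowerSeries.coeff_mk]
    have h : (k.factorial : ℝ) ≠ 0 := by positivity
    field_simp
  intro n
  rw [sum_even_only]
  · refine Finset.sum_congr rfl fun k hk => ?_
    have hk' : 2 * k ≤ n := by
      have := Finset.mem_range.1 hk
      omega
    congr 1
    rw [hm, coeff_gser_even, Nat.cast_choose ℝ hk', neg_pow, div_pow, ← pow_mul]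
    have h1 : ((2 * k).factorial : ℝ) ≠ 0 := by positivity
    have h2 : (k.factorial : ℝ) ≠ 0 := by positivity
    have h3 : ((n - 2 * k).factorial : ℝ) ≠ 0 := by positivity
    field_simp
  · intro k hk
    rw [hm, coeff_gser_odd _ _ hk]
    simp
end

section
/- For every n ≥ 1 and commuting indeterminates X, Y_2, …, Y_n, the following identity of polynomials holds: X^n + n! Σ_{k=2}^n Σ_{j=1}^k ((−1)^j/j!) Σ_{k_1,…,k_j ≥ 2, k_1+⋯+k_j = k} (Y_{k_1}/k_1!)⋯(Y_{k_j}/k_j!) · X^{n−k}/(n−k)! = n! Σ_{j_1,…,j_n ≥ 0, j_1+2j_2+⋯+nj_n = n} (X^{j_1}/j_1!) ∏_{p=2}^n (1/j_p!)(−Y_p/p!)^{j_p}. The right-hand side is the complete exponential Bell polynomial B_n(X, −Y_2, …, −Y_n). -/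
/-- The index set of the complete Bell polynomial: tuples `(j_1,…,j_n)` of nonnegative
integers with `j_1 + 2j_2 + ⋯ + nj_n = n`, encoded as `j : Fin n → ℕ` where `j i`
stands for `j_{i+1}`. -/
noncomputable def bellIdx (n : ℕ) : Finset (Fin n → ℕ) :=
  (Fintype.piFinset fun _ => Finset.range (n + 1)).filter fun j =>
    ∑ i : Fin n, ((i : ℕ) + 1) * j i = n

open Finset in
lemma aux_coeffA {R : Type*} [CommRing R] (s : Finset ℕ) (y : ℕ → R) (j k : ℕ) :
    ((∑ p ∈ s, Polynomial.C (y p) * Polynomial.X ^ p) ^ j).coeff k =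
      ∑ f ∈ (Fintype.piFinset fun _ : Fin j => s).filter (fun f => ∑ i, f i = k),
        ∏ i, y (f i) := by
  have h : (∑ p ∈ s, Polynomial.C (y p) * Polynomial.X ^ p) ^ j
      = ∏ _i : Fin j, ∑ p ∈ s, Polynomial.C (y p) * Polynomial.X ^ p := by simp
  rw [h, Finset.prod_univ_sum, Polynomial.finsetSum_coeff, Finset.sum_filter]
  refine Finset.sum_congr rfl fun f _ => ?_
  rw [Finset.prod_mul_distrib, Finset.prod_pow_eq_pow_sum, ← map_prod,
    Polynomial.coeff_C_mul_X_pow]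
  simp only [eq_comm]

open Finset in
lemma aux_coeffB {R : Type*} [CommRing R] [Algebra ℝ R] (n : ℕ) (y : Fin n → R) (m k : ℕ) :
    ((m.factorial : ℝ)⁻¹) •
      ((∑ p : Fin n, Polynomial.C (y p) * Polynomial.X ^ ((p : ℕ) + 1)) ^ m).coeff k =
      ∑ c ∈ (piAntidiag univ m).filter
          (fun c : Fin n → ℕ => ∑ i : Fin n, ((i : ℕ) + 1) * c i = k),
        (∏ i, ((c i).factorial : ℝ)⁻¹) • ∏ i, y i ^ c i := by
  rw [Finset.sum_pow_eq_sum_piAntidiag, Polynomial.finsetSum_coeff, Finset.sum_filter,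
    Finset.smul_sum]
  refine Finset.sum_congr rfl fun c hc => ?_
  have hm : ∑ i, c i = m := (mem_piAntidiag.1 hc).1
  simp only [mul_pow, ← pow_mul]
  rw [Finset.prod_mul_distrib, Finset.prod_pow_eq_pow_sum]
  simp only [← map_pow]
  rw [← map_prod, ← Polynomial.C_eq_natCast, Polynomial.coeff_C_mul,
    Polynomial.coeff_C_mul_X_pow]
  simp only [eq_comm (a := k)]
  split_ifs with h
  · have hs := Nat.multinomial_spec univ c
    rw [hm] at hs
    have hs' : (∏ i, ((c i).factorial : ℝ)) * (Nat.multinomial univ c : ℝ) = m.factorial := by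
      exact_mod_cast hs
    have hp : (∏ i, ((c i).factorial : ℝ)) ≠ 0 :=
      Finset.prod_ne_zero_iff.2 fun i _ => by positivity
    have hf : (m.factorial : ℝ) ≠ 0 := by positivity
    rw [← nsmul_eq_mul, ← Nat.cast_smul_eq_nsmul ℝ, smul_smul, Finset.prod_inv_distrib]
    congr 1
    field_simp
    linarith
  · simp

open Finset in
lemma aux_bell {R : Type*} [CommRing R] [Algebra ℝ R] (n : ℕ) (y : Fin n → R) :
    ∑ c ∈ bellIdx n, (∏ i, ((c i).factorial : ℝ)⁻¹) • ∏ i, y i ^ c i =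
    ∑ m ∈ range (n + 1), ((m.factorial : ℝ)⁻¹) •
      ((∑ p : Fin n, Polynomial.C (y p) * Polynomial.X ^ ((p : ℕ) + 1)) ^ m).coeff n := by
  have hle : ∀ c : Fin n → ℕ, ∑ i : Fin n, ((i : ℕ) + 1) * c i = n → ∑ i, c i ≤ n := by
    intro c hc
    calc ∑ i, c i ≤ ∑ i : Fin n, ((i : ℕ) + 1) * c i :=
          Finset.sum_le_sum fun i _ => Nat.le_mul_of_pos_left _ (Nat.succ_pos _)
      _ = n := hc
  simp only [aux_coeffB]
  rw [← Finset.sum_fiberwise_of_maps_to (s := bellIdx n) (t := range (n + 1))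
    (g := fun c => ∑ i, c i)]
  · refine Finset.sum_congr rfl fun m _ => Finset.sum_congr ?_ fun _ _ => rfl
    ext c
    simp only [bellIdx, mem_filter, Fintype.mem_piFinset, mem_range, mem_piAntidiag, mem_univ]
    constructor
    · rintro ⟨⟨_, h⟩, h'⟩
      exact ⟨⟨h', by simp⟩, h⟩
    · rintro ⟨⟨h', _⟩, h⟩
      refine ⟨⟨fun i => ?_, h⟩, h'⟩
      have h1 := hle c h
      have h2 : c i ≤ ∑ i, c i := Finset.single_le_sum (fun _ _ => Nat.zero_le _) (mem_univ i)
      omega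
  · intro c hc
    simp only [bellIdx, mem_filter] at hc
    have := hle c hc.2
    simp only [mem_range]
    omega

open Finset in
lemma aux_exp {R : Type*} [CommRing R] [Algebra ℝ R] (n : ℕ) (x : R) (P : Polynomial R) :
    ∑ m ∈ range (n + 1), ((m.factorial : ℝ)⁻¹) •
      ((Polynomial.C x * Polynomial.X + P) ^ m).coeff n =
    ∑ k ∈ range (n + 1), ∑ b ∈ range (k + 1),
      (((n - k).factorial : ℝ)⁻¹ * (b.factorial : ℝ)⁻¹) • (x ^ (n - k) * (P ^ b).coeff k) := by
  have h1 : ∀ m ∈ range (n + 1), ((m.factorial : ℝ)⁻¹) •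
      ((Polynomial.C x * Polynomial.X + P) ^ m).coeff n = ∑ a ∈ range (m + 1),
      ((a.factorial : ℝ)⁻¹ * ((m - a).factorial : ℝ)⁻¹) •
        (x ^ a * (P ^ (m - a)).coeff (n - a)) := by
    intro m hm
    rw [mem_range] at hm
    rw [add_pow, Polynomial.finsetSum_coeff, Finset.smul_sum]
    refine Finset.sum_congr rfl fun a ha => ?_
    rw [mem_range] at ha
    have e : (Polynomial.C x * Polynomial.X) ^ a * P ^ (m - a) * (m.choose a : Polynomial R)
        = Polynomial.C ((m.choose a : R) * x ^ a) * (P ^ (m - a) * Polynomial.X ^ a) := by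
      simp only [map_mul, map_pow, map_natCast]; ring
    rw [e, Polynomial.coeff_C_mul, Polynomial.coeff_mul_X_pow', if_pos (by omega), mul_assoc,
      ← nsmul_eq_mul, ← Nat.cast_smul_eq_nsmul ℝ, smul_smul]
    congr 1
    have := Nat.choose_mul_factorial_mul_factorial (show a ≤ m by omega)
    have h' : (m.choose a : ℝ) * a.factorial * (m - a).factorial = m.factorial := by
      exact_mod_cast this
    have hf : (m.factorial : ℝ) ≠ 0 := by positivity
    have hf1 : (a.factorial : ℝ) ≠ 0 := by positivity
    have hf2 : ((m - a).factorial : ℝ) ≠ 0 := by positivity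
    field_simp
    linarith
  rw [Finset.sum_congr rfl h1, Finset.sum_sigma', Finset.sum_sigma']
  refine Finset.sum_bij' (fun p _ => ⟨n - p.2, p.1 - p.2⟩) (fun p _ => ⟨n - p.1 + p.2, n - p.1⟩)
    ?_ ?_ ?_ ?_ ?_
  · rintro ⟨m, a⟩ h
    simp only [mem_sigma, mem_range] at h ⊢
    omega
  · rintro ⟨m, a⟩ h
    simp only [mem_sigma, mem_range] at h ⊢
    omega
  · rintro ⟨m, a⟩ h
    simp only [mem_sigma, mem_range] at h
    simp only [Sigma.mk.injEq, heq_eq_eq]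
    omega
  · rintro ⟨m, a⟩ h
    simp only [mem_sigma, mem_range] at h
    simp only [Sigma.mk.injEq, heq_eq_eq]
    omega
  · rintro ⟨m, a⟩ h
    simp only [mem_sigma, mem_range] at h
    have : n - (n - a) = a := by omega
    simp only [this]

/-- The substituted variables. -/
noncomputable def auxY (p : ℕ) : MvPolynomial ℕ ℝ :=
  if p = 1 then MvPolynomial.X 1 else (-((p.factorial : ℝ))⁻¹) • MvPolynomial.X p

open Finset in
lemma aux_tuples (n k j : ℕ) (hk : k ≤ n) :
    (Fintype.piFinset fun _ : Fin j => Icc 2 n).filter (fun f => ∑ i, f i = k) = tuples2 j k := by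
  ext f
  simp only [tuples2, mem_filter, Fintype.mem_piFinset, mem_Icc]
  constructor
  · rintro ⟨h, h'⟩
    refine ⟨fun i => ⟨(h i).1, ?_⟩, h'⟩
    rw [← h']
    exact Finset.single_le_sum (f := f) (fun _ _ => Nat.zero_le _) (mem_univ i)
  · rintro ⟨h, h'⟩
    exact ⟨fun i => ⟨(h i).1, (h i).2.trans hk⟩, h'⟩

open Finset in
lemma aux_split (n : ℕ) (hn : 1 ≤ n) :
    (∑ p : Fin n, Polynomial.C (auxY ((p : ℕ) + 1)) * Polynomial.X ^ ((p : ℕ) + 1)) =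
    Polynomial.C (MvPolynomial.X 1) * Polynomial.X +
      ∑ p ∈ Icc 2 n, Polynomial.C (auxY p) * Polynomial.X ^ p := by
  rw [Fin.sum_univ_eq_sum_range
    (fun p => Polynomial.C (auxY (p + 1)) * (Polynomial.X : Polynomial (MvPolynomial ℕ ℝ)) ^ (p + 1)) n]
  obtain ⟨n, rfl⟩ : ∃ m, n = m + 1 := ⟨n - 1, by omega⟩
  rw [Finset.sum_range_succ', add_comm]
  congr 1
  · simp [auxY]
  · refine Finset.sum_bij' (fun p _ => p + 2) (fun p _ => p - 2) ?_ ?_ ?_ ?_ ?_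
    all_goals intro a ha
    all_goals simp only [mem_range, mem_Icc] at *
    all_goals omega

open Finset in
lemma aux_term (n k j : ℕ) (hk : k ≤ n) (a : ℕ) :
    (((a.factorial : ℝ)⁻¹ * (j.factorial : ℝ)⁻¹) •
      ((MvPolynomial.X 1 : MvPolynomial ℕ ℝ) ^ a *
        ((∑ p ∈ Icc 2 n, Polynomial.C (auxY p) * Polynomial.X ^ p) ^ j).coeff k)) =
    ∑ f ∈ tuples2 j k,
          (((-1 : ℝ) ^ j / (j.factorial : ℝ)) * ((a.factorial : ℝ))⁻¹ *
              ∏ i, (((f i).factorial : ℝ))⁻¹) •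
            ((∏ i, (MvPolynomial.X (f i) : MvPolynomial ℕ ℝ)) *
              (MvPolynomial.X 1 : MvPolynomial ℕ ℝ) ^ a) := by
  rw [aux_coeffA, aux_tuples n k j hk, Finset.mul_sum, Finset.smul_sum]
  refine Finset.sum_congr rfl fun f hf => ?_
  have h2 : ∀ i, auxY (f i) = (-(((f i).factorial : ℝ))⁻¹) • MvPolynomial.X (f i) := by
    intro i
    simp only [tuples2, mem_filter, Fintype.mem_piFinset, mem_Icc] at hf
    have := (hf.1 i).1
    rw [auxY, if_neg (by omega)]
  simp only [h2]
  rw [Finset.prod_smul, mul_smul_comm, smul_smul, mul_comm (MvPolynomial.X 1 ^ a)]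
  congr 1
  rw [Finset.prod_neg]
  simp only [card_univ, Fintype.card_fin]
  ring

/-- For every `n ≥ 1`:
`X^n + n! Σ_{k=2}^n Σ_{j=1}^k ((−1)^j/j!) Σ_{k_1,…,k_j ≥ 2, k_1+⋯+k_j=k}
(Y_{k_1}/k_1!)⋯(Y_{k_j}/k_j!) · X^{n−k}/(n−k)!
= n! Σ_{j_1+2j_2+⋯+nj_n=n} (X^{j_1}/j_1!) ∏_{p=2}^n (1/j_p!)(−Y_p/p!)^{j_p}`,
the right-hand side being the complete exponential Bell polynomial `B_n(X,−Y_2,…,−Y_n)`. -/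
theorem stmt_11 (n : ℕ) (hn : 1 ≤ n) :
    (MvPolynomial.X 1 : MvPolynomial ℕ ℝ) ^ n +
      (n.factorial : ℝ) •
        ∑ k ∈ Finset.Icc 2 n, ∑ j ∈ Finset.Icc 1 k, ∑ f ∈ tuples2 j k,
          (((-1 : ℝ) ^ j / (j.factorial : ℝ)) * (((n - k).factorial : ℝ))⁻¹ *
              ∏ i, (((f i).factorial : ℝ))⁻¹) •
            ((∏ i, (MvPolynomial.X (f i) : MvPolynomial ℕ ℝ)) *
              (MvPolynomial.X 1 : MvPolynomial ℕ ℝ) ^ (n - k)) =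
    (n.factorial : ℝ) •
      ∑ j ∈ bellIdx n,
        ((∏ i : Fin n, ((((j i).factorial : ℝ))⁻¹ *
            (if (i : ℕ) = 0 then 1 else (-((((i : ℕ) + 1).factorial : ℝ))⁻¹) ^ (j i)))) •
          ∏ i : Fin n, (MvPolynomial.X ((i : ℕ) + 1) : MvPolynomial ℕ ℝ) ^ (j i)) := by
  have hR : ∀ j : Fin n → ℕ,
      ((∏ i : Fin n, ((((j i).factorial : ℝ))⁻¹ *
            (if (i : ℕ) = 0 then 1 else (-((((i : ℕ) + 1).factorial : ℝ))⁻¹) ^ (j i)))) •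
          ∏ i : Fin n, (MvPolynomial.X ((i : ℕ) + 1) : MvPolynomial ℕ ℝ) ^ (j i)) =
      (∏ i, ((j i).factorial : ℝ)⁻¹) • ∏ i : Fin n, auxY ((i : ℕ) + 1) ^ j i := by
    intro j
    rw [Finset.prod_mul_distrib, mul_smul, ← Finset.prod_smul]
    congr 1
    refine Finset.prod_congr rfl fun i _ => ?_
    by_cases h : (i : ℕ) = 0
    · simp [auxY, h]
    · rw [if_neg h, auxY, if_neg (by omega), smul_pow]
  simp only [hR]
  rw [aux_bell n (fun i => auxY ((i : ℕ) + 1)), aux_split n hn, aux_exp]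
  have hk : ∀ k ∈ Finset.range (n + 1), ∀ b ∈ Finset.range (k + 1), _ = _ := fun k hk b _ =>
    aux_term n k b (Nat.lt_succ_iff.1 (Finset.mem_range.1 hk)) (n - k)
  rw [Finset.sum_congr rfl fun k h => Finset.sum_congr rfl (hk k h)]
  have hsplit : Finset.range (n + 1) = insert 0 (insert 1 (Finset.Icc 2 n)) := by
    ext k
    simp only [Finset.mem_range, Finset.mem_insert, Finset.mem_Icc]
    omega
  rw [hsplit, Finset.sum_insert (by simp), Finset.sum_insert (by simp), smul_add]
  have t0 : ∀ k, k ≠ 0 → tuples2 0 k = ∅ := by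
    intro k hk
    ext f
    simp [tuples2, hk.symm]
  have t1 : tuples2 1 1 = ∅ := by
    ext f
    simp [tuples2]
  have t00 : tuples2 0 0 = Finset.univ := by
    ext f
    simp [tuples2]
  congr 1
  · have hf : (n.factorial : ℝ) ≠ 0 := by positivity
    simp [t00, smul_smul, hf]
  · congr 1
    rw [Finset.sum_range_succ, Finset.sum_range_one, t0 1 one_ne_zero, t1]
    simp only [Finset.sum_empty, add_zero, zero_add]
    refine Finset.sum_congr rfl fun k hk => ?_
    have hs : Finset.range (k + 1) = insert 0 (Finset.Icc 1 k) := by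
      ext j
      simp only [Finset.mem_range, Finset.mem_insert, Finset.mem_Icc]
      omega
    have hk2 := (Finset.mem_Icc.1 hk).1
    rw [hs, Finset.sum_insert (by simp), t0 k (by omega)]
    simp
end

section
/- Let d be a real number with d < 4, and let β : ℕ → ℕ be finitely supported with β(k) = 0 for k ∉ {2,3,4}, with β(3) even, and with β(2) + β(3) ≥ 1. If the degree deg(z^β) = d(β(2)+β(3)+β(4)−1) − ((d−2)/2)(2β(2)+3β(3)+4β(4)) is ≤ 0, then either β(2) = 1 and β(3) = 0 (so z^β = z_2 z_4^{β(4)}), or β(2) = 0 and β(3) = 2 (so z^β = z_3² z_4^{β(4)}). In other words, the only potentially divergent subdiagram multi-indices are z_2 z_4^{p−1} and z_3² z_4^{p−2}. -/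
/-- Divergent subdiagram multi-indices for the `Φ⁴` model in dimension `d < 4`:
if `β : ℕ → ℕ` is a multi-index supported on `{2,3,4}` with `β(3)` even and
`β(2) + β(3) ≥ 1`, and its degree
`deg(z^β) = d(β(2)+β(3)+β(4)−1) − ((d−2)/2)(2β(2)+3β(3)+4β(4))` is `≤ 0`,
then either `β(2) = 1 ∧ β(3) = 0` (i.e. `z^β = z_2 z_4^{β(4)}`), or
`β(2) = 0 ∧ β(3) = 2` (i.e. `z^β = z_3² z_4^{β(4)}`). -/
theorem stmt_12 (d : ℝ) (hd : d < 4) (β : ℕ → ℕ)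
    (hsupp : ∀ k : ℕ, k ∉ ({2, 3, 4} : Set ℕ) → β k = 0)
    (heven : Even (β 3)) (hpos : 1 ≤ β 2 + β 3)
    (hdeg : d * (((β 2 : ℝ) + (β 3 : ℝ) + (β 4 : ℝ)) - 1) -
        (d - 2) / 2 * (2 * (β 2 : ℝ) + 3 * (β 3 : ℝ) + 4 * (β 4 : ℝ)) ≤ 0) :
    (β 2 = 1 ∧ β 3 = 0) ∨ (β 2 = 0 ∧ β 3 = 2) := by
  have key : 2 * β 2 + β 3 < 4 := by
    by_contra h
    have h4 : (4 : ℝ) ≤ 2 * (β 2 : ℝ) + (β 3 : ℝ) := by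
      exact_mod_cast not_lt.mp h
    have h3 : 0 ≤ (4 - d) * (β 3 : ℝ) := mul_nonneg (by linarith) (Nat.cast_nonneg _)
    have hc : 0 ≤ (4 - d) * (β 4 : ℝ) := mul_nonneg (by linarith) (Nat.cast_nonneg _)
    nlinarith
  obtain ⟨m, hm⟩ := heven
  omega
end

section
/- Fix n ≥ 4. For p ≥ 2 let a_p, b_p ≥ 0 be integers with a_2 = 0, set m = Σ_p (a_p + b_p) ≥ 1 and s = Σ_p p(a_p + b_p), and assume s ≤ n. Consider the forest z^{β_1}⋯z^{β_m} consisting of a_p copies of z_2 z_4^{p−1} and b_p copies of z_3² z_4^{p−2}. Then the coefficient E(z^{β_1}⋯z^{β_m}, z^α, z_4^n) vanishes for every multi-index z^α except z^α = z_2^m z_4^{n−s}, and E(z^{β_1}⋯z^{β_m}, z_2^m z_4^{n−s}, z_4^n) = (n!/(n−s)!) ∏_{p≥2} (1/a_p!)(4!/(4(p−1)!))^{a_p} (1/b_p!)(4!/(3(p−2)!))^{b_p}. -/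
open scoped Classical

/-- A multi-index: a finitely supported function `β : ℕ → ℕ`, representing the
monomial `z^β = ∏_k z_k^{β(k)}`. -/
abbrev MIdx : Type := ℕ →₀ ℕ

/-- The symmetry factor `S_M(z^β) = ∏_k β(k)!(k!)^{β(k)}`. -/
noncomputable def SM (α : MIdx) : ℝ :=
  ∏ k ∈ α.support, ((α k).factorial : ℝ) * ((k.factorial : ℝ)) ^ (α k)

/-- The symmetry factor of a forest (a multiset of multi-indices):
`∏_i r_i! S_M(z^{γ_i})^{r_i}` over the distinct factors `γ_i` with multiplicities `r_i`. -/
noncomputable def SMforest (F : Multiset MIdx) : ℝ :=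
  ∏ γ ∈ F.toFinset, ((F.count γ).factorial : ℝ) * (SM γ) ^ (F.count γ)

/-- The monomial `z^α` in the polynomial algebra `ℝ[z_0, z_1, z_2, …]`. -/
noncomputable def zmon (α : MIdx) : MvPolynomial ℕ ℝ := MvPolynomial.monomial α 1

/-- The bilinear pairing with `⟨z^α, z^γ⟩ = S_M(z^α) δ_{α,γ}`. -/
noncomputable def pairing (p q : MvPolynomial ℕ ℝ) : ℝ :=
  ∑ α ∈ p.support, MvPolynomial.coeff α p * MvPolynomial.coeff α q * SM α

/-- The derivation `D = Σ_k z_{k+1} ∂_{z_k}` (the sum is finite on each polynomial). -/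
noncomputable def Dmap (p : MvPolynomial ℕ ℝ) : MvPolynomial ℕ ℝ :=
  ∑ k ∈ p.vars, MvPolynomial.X (k + 1) * MvPolynomial.pderiv k p

/-- The coefficient `E(z^{β_1}⋯z^{β_m}, z^α, z^β)` of the Bruned–Hou multi-index
coproduct, for the ordered tuple of multi-indices `B = (β_1,…,β_m)`:
`E = Σ_{k_1,…,k_m ∈ ℕ} Σ_{β̂_1+⋯+β̂_m+α̂ = β} [S_M(z^β)/(S_M(z^{β_1}⋯z^{β_m}) S_M(z^α))]
· (⟨∏_i ∂_{z_{k_i}} z^α, z^{α̂}⟩/S_M(z^{α̂})) · ∏_i (⟨D^{k_i} z^{β_i}, z^{β̂_i}⟩/S_M(z^{β̂_i}))`.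
(The sum over the `k_i` has finitely many nonzero terms, so it is written as a `tsum`;
the decompositions are parametrised by the tuples `β̂` with `Σ_i β̂_i ≤ β`, setting
`α̂ = β − Σ_i β̂_i`.) -/
noncomputable def Ecoef {m : ℕ} (B : Fin m → MIdx) (α β : MIdx) : ℝ :=
  ∑' k : Fin m → ℕ,
    ∑ bh ∈ (Fintype.piFinset fun _ : Fin m => Finset.Iic β).filter
        fun bh => (∑ i, bh i) ≤ β,
      (SM β / (SMforest (↑(List.ofFn B) : Multiset MIdx) * SM α)) *
        (pairing ((List.ofFn k).foldr (fun j p => MvPolynomial.pderiv j p) (zmon α))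
            (zmon (β - ∑ i, bh i)) / SM (β - ∑ i, bh i)) *
        ∏ i, pairing (Dmap^[k i] (zmon (B i))) (zmon (bh i)) / SM (bh i)

/-- The multi-index `z_2 z_4^{p−1}`. -/
noncomputable def ma (p : ℕ) : MIdx := Finsupp.single 2 1 + Finsupp.single 4 (p - 1)

/-- The multi-index `z_3² z_4^{p−2}`. -/
noncomputable def mb (p : ℕ) : MIdx := Finsupp.single 3 2 + Finsupp.single 4 (p - 2)

open MvPolynomial in
theorem SM_ne_zero (α : MIdx) : SM α ≠ 0 := by
  unfold SM
  refine Finset.prod_ne_zero_iff.2 fun k _ => ?_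
  positivity

theorem pairing_zmon (p : MvPolynomial ℕ ℝ) (γ : MIdx) :
    pairing p (zmon γ) / SM γ = MvPolynomial.coeff γ p := by
  rw [div_eq_iff (SM_ne_zero γ)]
  unfold pairing zmon
  rw [Finset.sum_eq_single γ]
  · simp
  · intro b _ hb
    rw [MvPolynomial.coeff_monomial, if_neg (Ne.symm hb)]
    simp
  · intro h
    rw [MvPolynomial.notMem_support_iff.1 h]
    simp

noncomputable def Dder : Derivation ℝ (MvPolynomial ℕ ℝ) (MvPolynomial ℕ ℝ) :=
  MvPolynomial.mkDerivation ℝ (fun i => MvPolynomial.X (i + 1))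

theorem Dmap_eq (p : MvPolynomial ℕ ℝ) : Dmap p = Dder p := by
  have h : Dmap p = (∑ k ∈ p.vars, (MvPolynomial.X (k + 1) : MvPolynomial ℕ ℝ) •
      MvPolynomial.pderiv (R := ℝ) k) p := by
    unfold Dmap
    rw [← Derivation.coeFnAddMonoidHom_apply, map_sum]
    simp [Finset.sum_apply]
  rw [h]
  apply MvPolynomial.derivation_eq_of_forall_mem_vars
  intro i hi
  rw [← Derivation.coeFnAddMonoidHom_apply, map_sum]
  simp only [Derivation.coeFnAddMonoidHom_apply, Finset.sum_apply, Derivation.smul_apply,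
    smul_eq_mul, Dder, MvPolynomial.mkDerivation_X]
  rw [Finset.sum_eq_single i]
  · simp
  · intro b _ hb
    rw [MvPolynomial.pderiv_X_of_ne (Ne.symm hb)]
    simp
  · intro h; exact absurd hi h

theorem Dmap_wh (w : ℕ → ℤ) (c : ℤ) (hw : ∀ i, w (i + 1) = w i + c) (p : MvPolynomial ℕ ℝ)
    (d : ℤ) (hp : p.IsWeightedHomogeneous w d) : (Dmap p).IsWeightedHomogeneous w (d + c) := by
  unfold Dmap
  apply MvPolynomial.IsWeightedHomogeneous.sum
  intro k _
  have h1 := (MvPolynomial.isWeightedHomogeneous_X ℝ w (k + 1)).mul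
    (hp.pderiv (i := k) (n' := d - w k) (by ring))
  have : w (k + 1) + (d - w k) = d + c := by rw [hw]; ring
  rwa [this] at h1

theorem Dmap_iter_wh (w : ℕ → ℤ) (c : ℤ) (hw : ∀ i, w (i + 1) = w i + c) (p : MvPolynomial ℕ ℝ)
    (d : ℤ) (hp : p.IsWeightedHomogeneous w d) (k : ℕ) :
    (Dmap^[k] p).IsWeightedHomogeneous w (d + k * c) := by
  induction k with
  | zero => simpa using hp
  | succ k ih =>
    rw [Function.iterate_succ_apply']
    have := Dmap_wh w c hw _ _ ih
    convert this using 1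
    push_cast; ring

theorem coeff_iter_zero (β : MIdx) (k j : ℕ)
    (h : ¬ (Finsupp.weight (fun i : ℕ => (i : ℤ) - 4) β + k = 0 ∧ j = β.degree)) :
    MvPolynomial.coeff (Finsupp.single 4 j) (Dmap^[k] (zmon β)) = 0 := by
  by_contra hc
  apply h
  have h1 := Dmap_iter_wh (fun i : ℕ => (i : ℤ) - 4) 1 (by intro i; push_cast; ring) (zmon β) _
    (MvPolynomial.isWeightedHomogeneous_monomial _ β 1 rfl) k hc
  have h2 := Dmap_iter_wh (fun i : ℕ => (1 : ℤ)) 0 (by intro i; ring) (zmon β) _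
    (MvPolynomial.isWeightedHomogeneous_monomial _ β 1 rfl) k hc
  simp [Finsupp.weight_single] at h1 h2
  refine ⟨h1.symm, ?_⟩
  have : Finsupp.weight (fun i : ℕ => (1 : ℤ)) β = (β.degree : ℤ) := by
    simp [Finsupp.weight_apply, Finsupp.degree_apply, Finsupp.sum]
  rw [this] at h2
  exact_mod_cast h2

theorem eval_coeff (f : MvPolynomial ℕ ℝ) (β : MIdx)
    (hf : ∀ j, j ≠ β.degree → MvPolynomial.coeff (Finsupp.single 4 j) f = 0) :
    MvPolynomial.coeff (Finsupp.single 4 β.degree) f =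
      MvPolynomial.eval (fun i => if i = 4 then 1 else 0) f := by
  rw [MvPolynomial.eval_eq, Finset.sum_eq_single (Finsupp.single 4 β.degree)]
  · rw [Finset.prod_eq_one]
    · simp
    · intro i hi
      have : i = 4 := by
        by_contra h
        simp [Finsupp.single_apply, Ne.symm h] at hi
      simp [this]
  · intro γ _ hγ
    by_cases h : γ.support ⊆ {4}
    · have : γ = Finsupp.single 4 (γ 4) := by
        rwa [Finsupp.support_subset_singleton] at h
      rw [this, hf, zero_mul]
      intro h'
      rw [h'] at this
      exact hγ this
    · obtain ⟨x, hx, hx4⟩ := Finset.not_subset.1 h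
      rw [Finset.prod_eq_zero hx, mul_zero]
      have : x ≠ 4 := by simpa using hx4
      rw [if_neg this, zero_pow]
      simpa using hx
  · intro h
    rw [MvPolynomial.notMem_support_iff.1 h]
    simp

theorem zmon_ma (p : ℕ) : zmon (ma p) = MvPolynomial.X 2 * MvPolynomial.X 4 ^ (p - 1) := by
  simp [zmon, ma, MvPolynomial.X, MvPolynomial.monomial_pow]

theorem zmon_mb (p : ℕ) : zmon (mb p) = MvPolynomial.X 3 ^ 2 * MvPolynomial.X 4 ^ (p - 2) := by
  simp [zmon, mb, MvPolynomial.X, MvPolynomial.monomial_pow]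

theorem deg_ma {p : ℕ} (hp : 2 ≤ p) : (ma p).degree = p := by
  simp [ma, -Finsupp.single_tsub]; omega

theorem deg_mb {p : ℕ} (hp : 2 ≤ p) : (mb p).degree = p := by
  simp [mb, -Finsupp.single_tsub]; omega

theorem wt_ma (p : ℕ) : Finsupp.weight (fun i : ℕ => (i : ℤ) - 4) (ma p) = -2 := by
  simp [ma, Finsupp.weight_single, -Finsupp.single_tsub]

theorem wt_mb (p : ℕ) : Finsupp.weight (fun i : ℕ => (i : ℤ) - 4) (mb p) = -2 := by
  simp [mb, Finsupp.weight_single, -Finsupp.single_tsub]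

theorem eval_ma (p : ℕ) : MvPolynomial.eval (fun i => if i = 4 then (1 : ℝ) else 0)
    (Dmap^[2] (zmon (ma p))) = 1 := by
  simp only [Function.iterate_succ, Function.iterate_zero, Function.comp, id, Dmap_eq, zmon_ma]
  simp [Derivation.leibniz, Derivation.leibniz_pow, Dder, MvPolynomial.mkDerivation_X]

theorem eval_mb (p : ℕ) : MvPolynomial.eval (fun i => if i = 4 then (1 : ℝ) else 0)
    (Dmap^[2] (zmon (mb p))) = 2 := by
  simp only [Function.iterate_succ, Function.iterate_zero, Function.comp, id, Dmap_eq, zmon_mb]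
  simp [Derivation.leibniz, Derivation.leibniz_pow, Dder, MvPolynomial.mkDerivation_X]

/-- value of the coefficient of the pure power of `z_4` -/
noncomputable def Vv (β : MIdx) : ℝ := if β 3 = 2 then 2 else 1

theorem Vv_ma (p : ℕ) : Vv (ma p) = 1 := by simp [Vv, ma]
theorem Vv_mb (p : ℕ) : Vv (mb p) = 2 := by simp [Vv, mb]

theorem coeff_main (β : MIdx) (hβ : ∃ p, 2 ≤ p ∧ (β = ma p ∨ β = mb p)) (k j : ℕ) :
    MvPolynomial.coeff (Finsupp.single 4 j) (Dmap^[k] (zmon β)) =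
      if k = 2 ∧ j = β.degree then Vv β else 0 := by
  have hw : Finsupp.weight (fun i : ℕ => (i : ℤ) - 4) β = -2 := by
    obtain ⟨p, _, rfl | rfl⟩ := hβ
    · exact wt_ma p
    · exact wt_mb p
  split_ifs with h
  · obtain ⟨rfl, rfl⟩ := h
    rw [eval_coeff]
    · obtain ⟨p, _, rfl | rfl⟩ := hβ
      · rw [eval_ma, Vv_ma]
      · rw [eval_mb, Vv_mb]
    · intro j hj
      apply coeff_iter_zero
      tauto
  · apply coeff_iter_zero
    rw [hw]
    rintro ⟨h1, h2⟩
    exact h ⟨by omega, h2⟩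

theorem coeff_foldr (m : ℕ) (p : MvPolynomial ℕ ℝ) (γ : MIdx) (hγ : γ 2 = 0) :
    ∀ q : ℕ, MvPolynomial.coeff (γ + Finsupp.single 2 q) ((List.replicate m 2).foldr
      (fun j p => MvPolynomial.pderiv j p) p) * (q.factorial : ℝ) =
    MvPolynomial.coeff (γ + Finsupp.single 2 (q + m)) p * ((q + m).factorial : ℝ) := by
  induction m with
  | zero => intro q; simp
  | succ m ih =>
    intro q
    rw [List.replicate_succ, List.foldr_cons, MvPolynomial.coeff_pderiv]
    have := ih (q + 1)
    rw [show q + (m + 1) = q + 1 + m by ring, ← this, add_assoc, ← Finsupp.single_add,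
      Nat.factorial_succ]
    simp [hγ]
    ring

theorem Ecoef_eq {m : ℕ} (n : ℕ) (B : Fin m → MIdx) (α : MIdx)
    (hB : ∀ i, ∃ p, 2 ≤ p ∧ (B i = ma p ∨ B i = mb p))
    (s : ℕ) (hs : ∑ i, (B i).degree = s) (hsn : s ≤ n) :
    Ecoef B α (Finsupp.single 4 n) =
      (SM (Finsupp.single 4 n) / (SMforest (↑(List.ofFn B) : Multiset MIdx) * SM α)) *
      ((if α = Finsupp.single 2 m + Finsupp.single 4 (n - s) then (m.factorial : ℝ) else 0)) *
      ∏ i, Vv (B i) := by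
  unfold Ecoef
  simp only [pairing_zmon]
  have hform : ∀ γ : MIdx, γ ≤ Finsupp.single 4 n → γ = Finsupp.single 4 (γ 4) := by
    intro γ hγ
    ext i
    by_cases h : i = 4
    · subst h; simp
    · have := hγ i
      simp [Finsupp.single_apply, Ne.symm h] at this ⊢
      exact this
  rw [tsum_eq_single (fun _ => 2)]
  · have hsum : ∑ i, Finsupp.single 4 (B i).degree = (Finsupp.single 4 s : MIdx) := by
      rw [← hs, Finsupp.single_finsetSum]
    rw [Finset.sum_eq_single (fun i => Finsupp.single 4 (B i).degree)]
    · rw [hsum, ← Finsupp.single_tsub, List.ofFn_const]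
      congr 1
      · congr 1
        have := coeff_foldr m (zmon α) (Finsupp.single 4 (n - s)) (by simp) 0
        simp only [Finsupp.single_zero, add_zero, zero_add, Nat.factorial_zero, Nat.cast_one,
          mul_one] at this
        rw [this, zmon, MvPolynomial.coeff_monomial, add_comm (Finsupp.single 4 (n - s))]
        split_ifs <;> simp
      · refine Finset.prod_congr rfl fun i _ => ?_
        rw [coeff_main _ (hB i)]
        simp
    · intro bh hbh hne
      rw [Finset.mem_filter, Fintype.mem_piFinset] at hbh
      obtain ⟨i, hi⟩ := Function.ne_iff.1 hne
      rw [Finset.prod_eq_zero (Finset.mem_univ i), mul_zero]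
      have h4 := hform _ (Finset.mem_Iic.1 (hbh.1 i))
      rw [h4, coeff_main _ (hB i), if_neg]
      rintro ⟨_, h⟩
      rw [h] at h4
      exact hi h4
    · intro h
      exfalso
      apply h
      rw [Finset.mem_filter, Fintype.mem_piFinset, hsum]
      refine ⟨fun i => Finset.mem_Iic.2 ?_, ?_⟩
      · rw [Finsupp.single_le_single]
        refine le_trans ?_ hsn
        rw [← hs]
        exact Finset.single_le_sum (f := fun i => (B i).degree) (fun _ _ => Nat.zero_le _) (Finset.mem_univ i)
      · rwa [Finsupp.single_le_single]
  · intro k hk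
    obtain ⟨i, hi⟩ := Function.ne_iff.1 hk
    apply Finset.sum_eq_zero
    intro bh hbh
    rw [Finset.mem_filter, Fintype.mem_piFinset] at hbh
    rw [Finset.prod_eq_zero (Finset.mem_univ i), mul_zero]
    have h4 := hform _ (Finset.mem_Iic.1 (hbh.1 i))
    rw [h4, coeff_main _ (hB i), if_neg]
    rintro ⟨h, _⟩
    exact hi h

theorem SM_ma {p : ℕ} (hp : 2 ≤ p) : SM (ma p) = 2 * ((p - 1).factorial * 24 ^ (p - 1)) := by
  have : (ma p).support = {2, 4} := by
    ext i
    simp only [Finsupp.mem_support_iff, ma, Finsupp.add_apply, Finsupp.single_apply,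
      Finset.mem_insert, Finset.mem_singleton]
    split_ifs <;> omega
  rw [SM, this, Finset.prod_pair (by norm_num)]
  simp [ma, Nat.factorial]

theorem SM_gen (S : Finset ℕ) (β : MIdx) (h : β.support ⊆ S) :
    SM β = ∏ k ∈ S, ((β k).factorial : ℝ) * ((k.factorial : ℝ)) ^ (β k) := by
  unfold SM
  apply Finset.prod_subset h
  intro x _ hx
  simp [Finsupp.notMem_support_iff.1 hx]

theorem SM_mb (p : ℕ) : SM (mb p) = 72 * ((p - 2).factorial * 24 ^ (p - 2)) := by
  rw [SM_gen {3, 4}, Finset.prod_pair (by norm_num)]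
  · simp [mb, Nat.factorial]; norm_num
  · intro i
    simp only [Finsupp.mem_support_iff, mb, Finsupp.add_apply, Finsupp.single_apply,
      Finset.mem_insert, Finset.mem_singleton]
    split_ifs <;> omega

theorem SM_24 (m q : ℕ) : SM (Finsupp.single 2 m + Finsupp.single 4 q) =
    m.factorial * 2 ^ m * (q.factorial * 24 ^ q) := by
  rw [SM_gen {2, 4}, Finset.prod_pair (by norm_num)]
  · simp [Nat.factorial]
  · intro i
    simp only [Finsupp.mem_support_iff, Finsupp.add_apply, Finsupp.single_apply,
      Finset.mem_insert, Finset.mem_singleton]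
    split_ifs <;> omega

theorem SM_4 (q : ℕ) : SM (Finsupp.single 4 q) = (q.factorial * 24 ^ q) := by
  have := SM_24 0 q
  simpa using this

theorem ma_inj {p q : ℕ} (hp : 2 ≤ p) (hq : 2 ≤ q) (h : ma p = ma q) : p = q := by
  rw [← deg_ma hp, h, deg_ma hq]

theorem mb_inj {p q : ℕ} (hp : 2 ≤ p) (hq : 2 ≤ q) (h : mb p = mb q) : p = q := by
  rw [← deg_mb hp, h, deg_mb hq]

theorem ma_ne_mb (p q : ℕ) : ma p ≠ mb q := by
  intro h
  have := DFunLike.congr_fun h 2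
  simp [ma, mb] at this

theorem map_prod_F {M : Type*} [CommMonoid M] (n : ℕ) (a b : ℕ → ℕ) (f : MIdx → M) :
    ((∑ p ∈ Finset.Icc 2 n,
        (Multiset.replicate (a p) (ma p) + Multiset.replicate (b p) (mb p))).map f).prod =
    ∏ p ∈ Finset.Icc 2 n, (f (ma p) ^ a p * f (mb p) ^ b p) := by
  induction (Finset.Icc 2 n) using Finset.induction_on with
  | empty => simp
  | insert x S hx ih => rw [Finset.sum_insert hx, Finset.prod_insert hx]; simp [ih]

theorem map_sum_F (n : ℕ) (a b : ℕ → ℕ) (f : MIdx → ℕ) :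
    ((∑ p ∈ Finset.Icc 2 n,
        (Multiset.replicate (a p) (ma p) + Multiset.replicate (b p) (mb p))).map f).sum =
    ∑ p ∈ Finset.Icc 2 n, (a p * f (ma p) + b p * f (mb p)) := by
  induction (Finset.Icc 2 n) using Finset.induction_on with
  | empty => simp
  | insert x S hx ih => rw [Finset.sum_insert hx, Finset.sum_insert hx]; simp [ih]

theorem SMforest_F (n : ℕ) (a b : ℕ → ℕ) :
    SMforest (∑ p ∈ Finset.Icc 2 n,
        (Multiset.replicate (a p) (ma p) + Multiset.replicate (b p) (mb p))) =
    ∏ p ∈ Finset.Icc 2 n, (((a p).factorial * (b p).factorial : ℝ) *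
      (SM (ma p) ^ a p * SM (mb p) ^ b p)) := by
  rw [SMforest, Finset.prod_mul_distrib, Finset.prod_mul_distrib, ← map_prod_F,
    Finset.prod_multiset_map_count]
  congr 1
  set F := ∑ p ∈ Finset.Icc 2 n,
        (Multiset.replicate (a p) (ma p) + Multiset.replicate (b p) (mb p)) with hF
  have hca : ∀ p ∈ Finset.Icc 2 n, F.count (ma p) = a p := by
    intro p hp
    rw [hF, Multiset.count_sum', Finset.sum_eq_single p]
    · simp [Multiset.count_replicate, (ma_ne_mb p p).symm]
    · intro q hq hqp
      have h1 : ma q ≠ ma p := fun h =>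
        hqp (ma_inj (Finset.mem_Icc.1 hq).1 (Finset.mem_Icc.1 hp).1 h)
      simp [Multiset.count_replicate, (ma_ne_mb p q).symm, h1]
    · intro h; exact absurd hp h
  have hcb : ∀ p ∈ Finset.Icc 2 n, F.count (mb p) = b p := by
    intro p hp
    rw [hF, Multiset.count_sum', Finset.sum_eq_single p]
    · simp [Multiset.count_replicate, (ma_ne_mb p p)]
    · intro q hq hqp
      have h1 : mb q ≠ mb p := fun h =>
        hqp (mb_inj (Finset.mem_Icc.1 hq).1 (Finset.mem_Icc.1 hp).1 h)
      simp [Multiset.count_replicate, (ma_ne_mb q p), h1]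
    · intro h; exact absurd hp h
  have hsub : F.toFinset ⊆ (Finset.Icc 2 n).image ma ∪ (Finset.Icc 2 n).image mb := by
    intro γ hγ
    rw [Multiset.mem_toFinset, hF, Multiset.mem_sum] at hγ
    obtain ⟨p, hp, h⟩ := hγ
    rw [Multiset.mem_add, Multiset.mem_replicate, Multiset.mem_replicate] at h
    rw [Finset.mem_union, Finset.mem_image, Finset.mem_image]
    rcases h with h | h
    · exact Or.inl ⟨p, hp, h.2.symm⟩
    · exact Or.inr ⟨p, hp, h.2.symm⟩
  rw [Finset.prod_subset hsub, Finset.prod_union, Finset.prod_image, Finset.prod_image,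
    Finset.prod_mul_distrib]
  · congr 1
    · exact Finset.prod_congr rfl fun p hp => by rw [hca p hp]
    · exact Finset.prod_congr rfl fun p hp => by rw [hcb p hp]
  · intro p hp q hq h
    exact mb_inj (Finset.mem_Icc.1 hp).1 (Finset.mem_Icc.1 hq).1 h
  · intro p hp q hq h
    exact ma_inj (Finset.mem_Icc.1 hp).1 (Finset.mem_Icc.1 hq).1 h
  · rw [Finset.disjoint_left]
    intro γ h1 h2
    obtain ⟨p, _, rfl⟩ := Finset.mem_image.1 h1
    obtain ⟨q, _, h⟩ := Finset.mem_image.1 h2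
    exact ma_ne_mb p q h.symm
  · intro γ _ h
    rw [Multiset.mem_toFinset] at h
    simp [Multiset.count_eq_zero_of_notMem h]

/-- Fix `n ≥ 4` and multiplicities `a_p, b_p` (`p ≥ 2`, `a_2 = 0`) with
`m = Σ_p (a_p+b_p) ≥ 1` and `s = Σ_p p(a_p+b_p) ≤ n`. For any ordered tuple `B`
realising the forest consisting of `a_p` copies of `z_2 z_4^{p−1}` and `b_p` copies of
`z_3² z_4^{p−2}`, the coefficient `E(B, z^α, z_4^n)` vanishes unless
`z^α = z_2^m z_4^{n−s}`, and
`E(B, z_2^m z_4^{n−s}, z_4^n) = (n!/(n−s)!) ∏_{p≥2} (1/a_p!)(4!/(4(p−1)!))^{a_p}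
(1/b_p!)(4!/(3(p−2)!))^{b_p}`. -/
theorem stmt_13 (n : ℕ) (hn : 4 ≤ n) (a b : ℕ → ℕ) (ha2 : a 2 = 0)
    (hsupp : ∀ p : ℕ, p ∉ Finset.Icc 2 n → a p = 0 ∧ b p = 0)
    (m s : ℕ)
    (hm : m = ∑ p ∈ Finset.Icc 2 n, (a p + b p))
    (hs : s = ∑ p ∈ Finset.Icc 2 n, p * (a p + b p))
    (hm1 : 1 ≤ m) (hsn : s ≤ n)
    (B : Fin m → MIdx)
    (hB : (↑(List.ofFn B) : Multiset MIdx) =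
      ∑ p ∈ Finset.Icc 2 n,
        (Multiset.replicate (a p) (ma p) + Multiset.replicate (b p) (mb p))) :
    (∀ α : MIdx, α ≠ Finsupp.single 2 m + Finsupp.single 4 (n - s) →
        Ecoef B α (Finsupp.single 4 n) = 0) ∧
    Ecoef B (Finsupp.single 2 m + Finsupp.single 4 (n - s)) (Finsupp.single 4 n) =
      ((n.factorial : ℝ) / ((n - s).factorial : ℝ)) *
        ∏ p ∈ Finset.Icc 2 n,
          ((((a p).factorial : ℝ))⁻¹ * (((Nat.factorial 4 : ℝ)) / (4 * ((p - 1).factorial : ℝ))) ^ (a p) *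
           ((((b p).factorial : ℝ))⁻¹ * (((Nat.factorial 4 : ℝ)) / (3 * ((p - 2).factorial : ℝ))) ^ (b p))) := by
  have hmem : ∀ i, ∃ p, 2 ≤ p ∧ (B i = ma p ∨ B i = mb p) := by
    intro i
    have h : B i ∈ (↑(List.ofFn B) : Multiset MIdx) := by
      rw [Multiset.mem_coe, List.mem_ofFn]
      exact ⟨i, rfl⟩
    rw [hB, Multiset.mem_sum] at h
    obtain ⟨p, hp, h⟩ := h
    rw [Multiset.mem_add, Multiset.mem_replicate, Multiset.mem_replicate] at h
    refine ⟨p, (Finset.mem_Icc.1 hp).1, ?_⟩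
    tauto
  have hdeg : ∑ i, (B i).degree = s := by
    have h := map_sum_F n a b (fun β => β.degree)
    rw [← hB, Multiset.map_coe, Multiset.sum_coe, List.map_ofFn, List.sum_ofFn] at h
    simp only [Function.comp] at h
    rw [h, hs]
    refine Finset.sum_congr rfl fun p hp => ?_
    rw [deg_ma (Finset.mem_Icc.1 hp).1, deg_mb (Finset.mem_Icc.1 hp).1]
    ring
  have hV : ∏ i, Vv (B i) = ∏ p ∈ Finset.Icc 2 n, (2 : ℝ) ^ b p := by
    have h := map_prod_F n a b Vv
    rw [← hB, Multiset.map_coe, Multiset.prod_coe, List.map_ofFn, List.prod_ofFn] at h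
    simp only [Function.comp] at h
    rw [h]
    refine Finset.prod_congr rfl fun p _ => ?_
    rw [Vv_ma, Vv_mb, one_pow, one_mul]
  refine ⟨fun α hα => ?_, ?_⟩
  · rw [Ecoef_eq n B α hmem s hdeg hsn, if_neg hα]
    simp
  · rw [Ecoef_eq n B _ hmem s hdeg hsn, if_pos rfl, hV, hB, SMforest_F, SM_24, SM_4]
    have h24 : (24 : ℝ) ^ n = 24 ^ (n - s) * ∏ p ∈ Finset.Icc 2 n, (24 : ℝ) ^ (p * (a p + b p)) := by
      rw [Finset.prod_pow_eq_pow_sum, ← hs, ← pow_add]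
      congr 1
      omega
    have h2 : (2 : ℝ) ^ m = ∏ p ∈ Finset.Icc 2 n, (2 : ℝ) ^ (a p + b p) := by
      rw [Finset.prod_pow_eq_pow_sum, ← hm]
    have key : (∏ p ∈ Finset.Icc 2 n, (24 : ℝ) ^ (p * (a p + b p))) *
        (∏ p ∈ Finset.Icc 2 n, (2 : ℝ) ^ b p) =
        (∏ p ∈ Finset.Icc 2 n, (((a p).factorial * (b p).factorial : ℝ) *
          (SM (ma p) ^ a p * SM (mb p) ^ b p))) * (∏ p ∈ Finset.Icc 2 n, (2 : ℝ) ^ (a p + b p)) *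
        ∏ p ∈ Finset.Icc 2 n,
          ((((a p).factorial : ℝ))⁻¹ * (((Nat.factorial 4 : ℝ)) / (4 * ((p - 1).factorial : ℝ))) ^ (a p) *
           ((((b p).factorial : ℝ))⁻¹ * (((Nat.factorial 4 : ℝ)) / (3 * ((p - 2).factorial : ℝ))) ^ (b p))) := by
      rw [← Finset.prod_mul_distrib, ← Finset.prod_mul_distrib, ← Finset.prod_mul_distrib]
      refine Finset.prod_congr rfl fun p hp => ?_
      have hp2 := (Finset.mem_Icc.1 hp).1
      rw [SM_ma hp2, SM_mb]
      obtain ⟨q, rfl⟩ := Nat.exists_eq_add_of_le' hp2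
      have e1 : (24 : ℝ) ^ (q + 2) = (2 * ((q + 2 - 1).factorial * 24 ^ (q + 2 - 1))) * 2 *
          ((Nat.factorial 4 : ℝ) / (4 * ((q + 2 - 1).factorial : ℝ))) := by
        have : ((q + 2 - 1).factorial : ℝ) ≠ 0 := by positivity
        rw [show (Nat.factorial 4 : ℝ) = 24 by norm_num [Nat.factorial]]
        field_simp
        rw [show q + 2 - 1 = q + 1 by omega]
        ring
      have e2 : (24 : ℝ) ^ (q + 2) * 2 = (72 * ((q + 2 - 2).factorial * 24 ^ (q + 2 - 2))) * 2 *
          ((Nat.factorial 4 : ℝ) / (3 * ((q + 2 - 2).factorial : ℝ))) := by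
        have : ((q + 2 - 2).factorial : ℝ) ≠ 0 := by positivity
        rw [show (Nat.factorial 4 : ℝ) = 24 by norm_num [Nat.factorial]]
        field_simp
        rw [show q + 2 - 2 = q by omega]
        ring
      have hA : ((a (q + 2)).factorial : ℝ) ≠ 0 := by positivity
      have hBf : ((b (q + 2)).factorial : ℝ) ≠ 0 := by positivity
      calc (24 : ℝ) ^ ((q + 2) * (a (q + 2) + b (q + 2))) * 2 ^ b (q + 2)
          = (24 ^ (q + 2)) ^ a (q + 2) * (24 ^ (q + 2) * 2) ^ b (q + 2) := by
            rw [pow_mul, pow_add, mul_pow]; ring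
        _ = _ := by
            rw [e2]
            conv_lhs => rw [e1]
            generalize ((Nat.factorial 4 : ℝ) / (4 * ((q + 2 - 1).factorial : ℝ))) = x
            generalize ((Nat.factorial 4 : ℝ) / (3 * ((q + 2 - 2).factorial : ℝ))) = y
            generalize (2 * (((q + 2 - 1).factorial : ℝ) * 24 ^ (q + 2 - 1))) = u
            generalize (72 * (((q + 2 - 2).factorial : ℝ) * 24 ^ (q + 2 - 2))) = v
            simp only [mul_pow, pow_add]
            field_simp
    have hne : (∏ p ∈ Finset.Icc 2 n, (((a p).factorial * (b p).factorial : ℝ) *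
          (SM (ma p) ^ a p * SM (mb p) ^ b p))) ≠ 0 := by
      refine Finset.prod_ne_zero_iff.2 fun p _ => ?_
      have := SM_ne_zero (ma p)
      have := SM_ne_zero (mb p)
      positivity
    have hne2 : (∏ p ∈ Finset.Icc 2 n, (2 : ℝ) ^ (a p + b p)) ≠ 0 := by
      rw [← h2]; positivity
    rw [h24, h2]
    revert key hne hne2
    generalize (∏ p ∈ Finset.Icc 2 n, (((a p).factorial * (b p).factorial : ℝ) *
          (SM (ma p) ^ a p * SM (mb p) ^ b p))) = F
    generalize (∏ p ∈ Finset.Icc 2 n, (2 : ℝ) ^ (a p + b p)) = G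
    generalize (∏ p ∈ Finset.Icc 2 n, (24 : ℝ) ^ (p * (a p + b p))) = H
    generalize (∏ p ∈ Finset.Icc 2 n, (2 : ℝ) ^ b p) = K
    generalize (∏ p ∈ Finset.Icc 2 n,
          ((((a p).factorial : ℝ))⁻¹ * (((Nat.factorial 4 : ℝ)) / (4 * ((p - 1).factorial : ℝ))) ^ (a p) *
           ((((b p).factorial : ℝ))⁻¹ * (((Nat.factorial 4 : ℝ)) / (3 * ((p - 2).factorial : ℝ))) ^ (b p)))) = R
    intro key hne hne2
    have h3 : ((n - s).factorial : ℝ) ≠ 0 := by positivity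
    have h4 : (m.factorial : ℝ) ≠ 0 := by positivity
    field_simp
    linear_combination key
end
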